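/- arXiv:2401.04019 — 2 statements merged into one kernel-verified Lean document; each statement's English description precedes it below -/
import Mathlib

section
/- Let k ≥ 1 be an integer. Then for all integers n ≥ 0, (−1)^{k−1} · ( ρ_6(n) − Σ_{j=−k}^{k} (−1)^j b_6(n − j(3j−1)/2) ) ≥ 0, and the inequality is strict whenever n ≥ (k+1)(3(k+1)−1)/2. -/
/-- `b6 m` is the number of 6-regular partitions of `m` (partitions with no part
divisible by 6), with `b6 m = 0` for `m < 0`. A partition is a multiset of positive parts. -/
noncomputable def b6 (m : ℤ) : ℕ :=
  Nat.card {s : Multiset ℕ // (s.sum : ℤ) = m ∧ ∀ a ∈ s, 0 < a ∧ ¬ 6 ∣ a}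

open PowerSeries PowerSeries.WithPiTopology in
lemma series_identity :
    (PowerSeries.mk fun n ↦ ((Nat.Partition.restricted n (¬ 6 ∣ ·)).card : ℤ)) *
      pentagonalSeries ℤ = PowerSeries.expand 6 (by norm_num) (pentagonalSeries ℤ) := by
  rw [Nat.Partition.powerSeriesMk_card_restricted_eq_powerSeriesMk_card_countRestricted ℤ
    (by norm_num : 0 < 6)]
  have h1 := Nat.Partition.hasProd_powerSeriesMk_card_countRestricted ℤ (by norm_num : 0 < 6)
  have h2 := hasProd_one_sub_X_pow ℤ
  have h3 := h1.mul h2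
  have h4 : HasProd (fun i ↦ (1 - X ^ ((i + 1) * 6) : ℤ⟦X⟧))
      (PowerSeries.expand 6 (by norm_num) (pentagonalSeries ℤ)) := by
    have hc : Continuous (PowerSeries.expand (R := ℤ) 6 (by norm_num)) := by
      rw [continuous_iff_continuousAt]
      intro f
      unfold ContinuousAt
      rw [tendsto_iff_coeff_tendsto]
      intro d
      simp only [coeff_expand]
      split_ifs
      · exact (continuous_coeff ℤ _).continuousAt
      · exact tendsto_const_nhds
    have := h2.map (PowerSeries.expand (R := ℤ) 6 (by norm_num)) hc
    convert this using 1
    ext1 i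
    simp [← pow_mul, mul_comm]
  refine h3.unique ?_
  have e : (fun b : ℕ ↦ (∑ j ∈ Finset.range 6, (X : ℤ⟦X⟧) ^ ((b + 1) * j)) * (1 - X ^ (b + 1))) =
      fun i ↦ (1 - X ^ ((i + 1) * 6) : ℤ⟦X⟧) := by
    ext1 i
    simp_rw [pow_mul, geom_sum_mul_neg]
  rw [e]
  exact h4

lemma b6_neg {m : ℤ} (h : m < 0) : b6 m = 0 := by
  unfold b6
  have : IsEmpty {s : Multiset ℕ // (s.sum : ℤ) = m ∧ ∀ a ∈ s, 0 < a ∧ ¬ 6 ∣ a} := by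
    refine ⟨fun s => ?_⟩
    have := s.2.1
    omega
  exact Nat.card_of_isEmpty

def b6equiv (n : ℕ) : {s : Multiset ℕ // (s.sum : ℤ) = (n : ℤ) ∧ ∀ a ∈ s, 0 < a ∧ ¬ 6 ∣ a} ≃
    {p : Nat.Partition n // p ∈ Nat.Partition.restricted n (¬ 6 ∣ ·)} where
  toFun s := ⟨⟨s.1, fun h => (s.2.2 _ h).1, by exact_mod_cast s.2.1⟩, by
    simp only [Nat.Partition.restricted, Finset.mem_filter, Finset.mem_univ, true_and]
    exact fun i hi => (s.2.2 i hi).2⟩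
  invFun p := ⟨p.1.parts, by exact_mod_cast p.1.parts_sum, fun a ha => ⟨p.1.parts_pos ha, by
    have := p.2
    simp only [Nat.Partition.restricted, Finset.mem_filter, Finset.mem_univ, true_and] at this
    exact this a ha⟩⟩
  left_inv s := rfl
  right_inv p := rfl

lemma b6_nat (n : ℕ) : b6 (n : ℤ) = (Nat.Partition.restricted n (¬ 6 ∣ ·)).card := by
  unfold b6
  rw [Nat.card_congr (b6equiv n)]
  simp

lemma b6_fin (m : ℤ) : Finite {s : Multiset ℕ // (s.sum : ℤ) = m ∧ ∀ a ∈ s, 0 < a ∧ ¬ 6 ∣ a} := by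
  rcases lt_or_ge m 0 with h | h
  · have : IsEmpty {s : Multiset ℕ // (s.sum : ℤ) = m ∧ ∀ a ∈ s, 0 < a ∧ ¬ 6 ∣ a} := by
      refine ⟨fun s => ?_⟩
      have := s.2.1
      omega
    infer_instance
  · lift m to ℕ using h
    exact Finite.of_equiv _ (b6equiv m).symm

def b6inj (x : ℤ) (r : ℕ) (hr : ¬ 6 ∣ r) :
    {s : Multiset ℕ // (s.sum : ℤ) = x - r ∧ ∀ a ∈ s, 0 < a ∧ ¬ 6 ∣ a} →
    {s : Multiset ℕ // (s.sum : ℤ) = x ∧ ∀ a ∈ s, 0 < a ∧ ¬ 6 ∣ a} := fun s =>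
  ⟨r ::ₘ s.1, by
    have := s.2.1
    rw [Multiset.sum_cons, Nat.cast_add]; omega, by
    intro a ha
    rcases Multiset.mem_cons.1 ha with rfl | ha
    · exact ⟨by omega, hr⟩
    · exact s.2.2 a ha⟩

lemma b6inj_inj (x : ℤ) (r : ℕ) (hr : ¬ 6 ∣ r) : Function.Injective (b6inj x r hr) := by
  intro s t h
  have := congrArg Subtype.val h
  simp only [b6inj] at this
  exact Subtype.ext ((Multiset.cons_inj_right r).1 this)

lemma b6_mono (x : ℤ) (r : ℕ) (hr : ¬ 6 ∣ r) : b6 (x - r) ≤ b6 x := by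
  have := b6_fin x
  exact Nat.card_le_card_of_injective _ (b6inj_inj x r hr)

lemma b6_strict (x : ℤ) (hx : 0 ≤ x) (r : ℕ) (hr : ¬ 6 ∣ r) (h2 : 2 ≤ r) :
    b6 (x - r) < b6 x := by
  have := b6_fin x
  have := b6_fin (x - r)
  refine lt_of_le_of_ne (b6_mono x r hr) fun h => ?_
  have hb := (Nat.bijective_iff_injective_and_card (b6inj x r hr)).2 ⟨b6inj_inj x r hr, h⟩
  obtain ⟨s, hs⟩ := hb.2 ⟨Multiset.replicate x.toNat 1, by simp [hx], by
    intro a ha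
    rw [Multiset.eq_of_mem_replicate ha]; norm_num⟩
  have h3 := congrArg Subtype.val hs
  simp only [b6inj] at h3
  have h4 : r ∈ Multiset.replicate x.toNat 1 := by rw [← h3]; simp
  have := Multiset.eq_of_mem_replicate h4
  omega

lemma pent_ge (j : ℤ) : (j.natAbs : ℤ) ≤ pentagonal j := by
  have := two_mul_natCast_pentagonal j
  rcases le_total 0 j with h | h
  · rw [Int.natAbs_of_nonneg h]
    rcases h.eq_or_lt with h | h
    · subst h; simp
    · nlinarith
  · rw [Int.ofNat_natAbs_of_nonpos h]
    nlinarith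

lemma rho_eq (ρ : ℤ → ℤ)
    (hρ1 : ∀ i : ℤ, ρ (6 * (i * (3 * i - 1) / 2)) = (-1) ^ i.natAbs)
    (hρ2 : ∀ m : ℤ, (∀ i : ℤ, m ≠ 6 * (i * (3 * i - 1) / 2)) → ρ m = 0) (n : ℕ) :
    ρ n = (PowerSeries.expand 6 (by norm_num) (PowerSeries.pentagonalSeries ℤ)).coeff n := by
  by_cases h : ∃ i : ℤ, n = 6 * pentagonal i
  · obtain ⟨i, rfl⟩ := h
    rw [PowerSeries.coeff_expand_mul, PowerSeries.coeff_pentagonalSeries_pentagonal]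
    push_cast
    rw [natCast_pentagonal, hρ1]
    exact (Int.coe_negOnePow ℤ i).symm
  · push Not at h
    rw [hρ2 n (fun i hi => h i (by rw [← natCast_pentagonal] at hi; exact_mod_cast hi)),
      PowerSeries.coeff_expand]
    split_ifs with hd
    · obtain ⟨m, rfl⟩ := hd
      rw [PowerSeries.coeff_pentagonalSeries_eq_zero]
      rintro ⟨i, hi⟩
      apply h i
      rw [hi]; omega
    · rfl

lemma full_sum (n N : ℕ) (hN : n ≤ N) :
    (PowerSeries.expand 6 (by norm_num) (PowerSeries.pentagonalSeries ℤ)).coeff n =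
    ∑ j ∈ Finset.Icc (-(N : ℤ)) (N : ℤ),
            (-1 : ℤ) ^ j.natAbs * (b6 (n - j * (3 * j - 1) / 2) : ℤ) := by
  rw [← series_identity, mul_comm, PowerSeries.coeff_mul,
    Finset.Nat.sum_antidiagonal_eq_sum_range_succ_mk]
  let g : ℕ → ℤ := fun b => (PowerSeries.pentagonalSeries ℤ).coeff b * b6 ((n : ℤ) - b)
  have e1 : ∀ j : ℤ, (-1 : ℤ) ^ j.natAbs * (b6 (n - j * (3 * j - 1) / 2) : ℤ)
      = g (pentagonal j) := by
    intro j
    simp only [g]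
    rw [PowerSeries.coeff_pentagonalSeries_pentagonal, natCast_pentagonal]
    congr 1
    exact (Int.coe_negOnePow ℤ j).symm
  rw [Finset.sum_congr rfl (fun j _ => e1 j),
    ← Finset.sum_image (f := g) (g := pentagonal) pentagonal_injective.injOn]
  have e2 : ∀ b ∈ Finset.range n.succ, (PowerSeries.coeff b (PowerSeries.pentagonalSeries ℤ) *
      PowerSeries.coeff (n - b) (PowerSeries.mk fun n ↦ ((Nat.Partition.restricted n (¬ 6 ∣ ·)).card : ℤ)))
      = g b := by
    intro b hb
    have : b ≤ n := by simpa [Nat.lt_succ_iff] using hb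
    simp only [g, PowerSeries.coeff_mk]
    rw [← Nat.cast_sub this, b6_nat]
  rw [Finset.sum_congr rfl e2]
  have z1 : ∀ b, n < b → g b = 0 := by
    intro b hb
    simp only [g]
    rw [b6_neg (by omega)]; simp
  have z2 : ∀ b, b ∉ Set.range pentagonal → g b = 0 := by
    intro b hb
    simp only [g]
    rw [PowerSeries.coeff_pentagonalSeries_eq_zero _ hb]; simp
  let T := Finset.range n.succ ∪ (Finset.Icc (-(N : ℤ)) (N : ℤ)).image pentagonal
  rw [Finset.sum_subset (Finset.subset_union_left : _ ⊆ T),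
    Finset.sum_subset (Finset.subset_union_right : _ ⊆ T)]
  · intro b hb hb2
    by_cases hr : b ∈ Set.range pentagonal
    · obtain ⟨j, rfl⟩ := hr
      apply z1
      by_contra hc
      apply hb2
      apply Finset.mem_image_of_mem
      have := pent_ge j
      rw [Finset.mem_Icc]
      omega
    · exact z2 b hr
  · intro b hb hb2
    apply z1
    simpa using hb2

lemma alt_sum (u : ℕ → ℤ) (h0 : ∀ m, 0 ≤ u m) (d : ℕ) :
    ∀ k, 1 ≤ k → (∀ m, 1 ≤ m → u (m+1) ≤ u m) →
    0 ≤ ∑ i ∈ Finset.range d, (-1 : ℤ)^i * u (k + i) ∧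
    ∑ i ∈ Finset.range d, (-1 : ℤ)^i * u (k + i) ≤ u k := by
  induction d with
  | zero => intro k _ _; simpa using h0 k
  | succ d ih =>
    intro k hk hm
    have := ih (k+1) (by omega) hm
    rw [Finset.sum_range_succ']
    have e : ∑ i ∈ Finset.range d, (-1 : ℤ)^(i+1) * u (k + (i+1)) =
        - ∑ i ∈ Finset.range d, (-1 : ℤ)^i * u (k + 1 + i) := by
      rw [← Finset.sum_neg_distrib]
      refine Finset.sum_congr rfl fun i _ => ?_
      rw [show k + (i+1) = k + 1 + i by ring]; ring
    rw [e]
    have := hm k hk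
    simp only [pow_zero, one_mul, add_zero]
    constructor <;> linarith

lemma sum_Icc_step (t : ℤ → ℤ) (k : ℕ) :
    ∑ j ∈ Finset.Icc (-((k + 1 : ℕ) : ℤ)) ((k + 1 : ℕ) : ℤ), t j =
      ∑ j ∈ Finset.Icc (-(k : ℤ)) (k : ℤ), t j + (t (k+1) + t (-(k+1))) := by
  have : Finset.Icc (-((k + 1 : ℕ) : ℤ)) ((k + 1 : ℕ) : ℤ) =
    insert ((k:ℤ)+1) (insert (-((k:ℤ)+1)) (Finset.Icc (-(k : ℤ)) (k : ℤ))) := by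
    ext x; simp only [Finset.mem_Icc, Finset.mem_insert]; omega
  rw [this, Finset.sum_insert, Finset.sum_insert]
  · ring
  · simp
  · simp only [Finset.mem_Icc, Finset.mem_insert]; omega

lemma sum_Icc_tail (t : ℤ → ℤ) (k d : ℕ) :
    ∑ j ∈ Finset.Icc (-((k + d : ℕ) : ℤ)) ((k + d : ℕ) : ℤ), t j =
      ∑ j ∈ Finset.Icc (-(k : ℤ)) (k : ℤ), t j +
       ∑ i ∈ Finset.range d, (t ((k+1+i : ℕ)) + t (-((k+1+i : ℕ) : ℤ))) := by
  induction d with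
  | zero => simp
  | succ d ih =>
    rw [Finset.sum_range_succ, ← add_assoc k d 1, sum_Icc_step, ih, add_assoc]
    push_cast
    rw [show (k:ℤ) + 1 + d = k + d + 1 by ring]

theorem stmt4 (k : ℕ) (hk : 1 ≤ k)
    (ρ : ℤ → ℤ)
    (hρ1 : ∀ i : ℤ, ρ (6 * (i * (3 * i - 1) / 2)) = (-1) ^ i.natAbs)
    (hρ2 : ∀ m : ℤ, (∀ i : ℤ, m ≠ 6 * (i * (3 * i - 1) / 2)) → ρ m = 0)
    (n : ℤ) (hn : 0 ≤ n) :
    0 ≤ (-1 : ℤ) ^ (k - 1) *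
          (ρ n - ∑ j ∈ Finset.Icc (-(k : ℤ)) (k : ℤ),
            (-1 : ℤ) ^ j.natAbs * (b6 (n - j * (3 * j - 1) / 2) : ℤ)) ∧
      (((k : ℤ) + 1) * (3 * ((k : ℤ) + 1) - 1) / 2 ≤ n →
        0 < (-1 : ℤ) ^ (k - 1) *
          (ρ n - ∑ j ∈ Finset.Icc (-(k : ℤ)) (k : ℤ),
            (-1 : ℤ) ^ j.natAbs * (b6 (n - j * (3 * j - 1) / 2) : ℤ))) := by
  lift n to ℕ using hn
  let u : ℕ → ℤ := fun m => (b6 (n - pentagonal m) : ℤ) + b6 (n - pentagonal (-m))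
  have key : (-1 : ℤ) ^ (k - 1) *
          (ρ n - ∑ j ∈ Finset.Icc (-(k : ℤ)) (k : ℤ),
            (-1 : ℤ) ^ j.natAbs * (b6 (n - j * (3 * j - 1) / 2) : ℤ)) =
      ∑ i ∈ Finset.range (n + 1), (-1 : ℤ)^i * u (k + 1 + i) := by
    rw [rho_eq ρ hρ1 hρ2, full_sum n (k + (n + 1)) (by omega), sum_Icc_tail, add_sub_cancel_left,
      Finset.mul_sum]
    refine Finset.sum_congr rfl fun i _ => ?_
    simp only [u, natCast_pentagonal, Int.natAbs_neg, Int.natAbs_natCast]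
    rw [← mul_add, ← mul_assoc, ← pow_add]
    congr 1
    rw [show k - 1 + (k + 1 + i) = 2 * k + i by omega, pow_add, pow_mul]
    simp
  have p1 : ∀ m : ℕ, (pentagonal ((m + 1 : ℕ) : ℤ) : ℤ) = pentagonal m + (3 * m + 1 : ℕ) := by
    intro m
    have := two_mul_natCast_pentagonal m
    have := two_mul_natCast_pentagonal ((m + 1 : ℕ) : ℤ)
    push_cast at *
    linarith
  have p2 : ∀ m : ℕ, (pentagonal (-((m + 1 : ℕ) : ℤ)) : ℤ) = pentagonal (-m) + (3 * m + 2 : ℕ) := by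
    intro m
    have := two_mul_natCast_pentagonal (-m)
    have := two_mul_natCast_pentagonal (-((m + 1 : ℕ) : ℤ))
    push_cast at *
    linarith
  have h0 : ∀ m, 0 ≤ u m := fun m => by positivity
  have hm : ∀ m, 1 ≤ m → u (m+1) ≤ u m := by
    intro m _
    simp only [u]
    rw [p1, p2, ← sub_sub, ← sub_sub]
    have := b6_mono (n - pentagonal m) (3 * m + 1) (by omega)
    have := b6_mono (n - pentagonal (-m)) (3 * m + 2) (by omega)
    omega
  rw [key]
  refine ⟨(alt_sum u h0 _ (k+1) (by omega) hm).1, fun hle => ?_⟩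
  have hs : u (k + 1 + 1) < u (k + 1) := by
    simp only [u]
    rw [p1 (k+1), p2 (k+1), ← sub_sub, ← sub_sub]
    have h5 : (pentagonal ((k + 1 : ℕ) : ℤ) : ℤ) ≤ n := by
      rw [natCast_pentagonal]; exact_mod_cast hle
    have := b6_strict (n - pentagonal ((k + 1 : ℕ) : ℤ)) (by omega) (3 * (k + 1) + 1) (by omega)
      (by omega)
    have := b6_mono (n - pentagonal (-((k + 1 : ℕ) : ℤ))) (3 * (k + 1) + 2) (by omega)
    omega
  have h6 := (alt_sum u h0 n (k+1+1) (by omega) hm).2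
  rw [Finset.sum_range_succ']
  have e : ∑ i ∈ Finset.range n, (-1 : ℤ)^(i+1) * u (k + 1 + (i+1)) =
      - ∑ i ∈ Finset.range n, (-1 : ℤ)^i * u (k + 1 + 1 + i) := by
    rw [← Finset.sum_neg_distrib]
    refine Finset.sum_congr rfl fun i _ => ?_
    rw [show k + 1 + (i+1) = k + 1 + 1 + i by ring]; ring
  rw [e]
  simp only [pow_zero, one_mul, add_zero]
  linarith
end

section
/- For every integer n ≥ 0, Q̄_{4,3}(n) + Q̄_{4,1}(n) ≥ Q(n − 1). -/
/-- `Q m` is the number of partitions of `m` into distinct parts, with `Q m = 0`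
for `m < 0`. A partition is a multiset of positive parts. -/
noncomputable def Q (m : ℤ) : ℕ :=
  Nat.card {s : Multiset ℕ // (s.sum : ℤ) = m ∧ s.Nodup ∧ ∀ a ∈ s, 0 < a}

/-- `Qbar a m` is the number of partitions `π` of `m` into odd parts such that
`mex_{4,a}(π) ≡ 4 + a (mod 8)`, where `mex_{4,a}(π)` is the smallest positive
integer congruent to `a` mod `4` that is not a part of `π`. -/
noncomputable def Qbar (a : ℕ) (m : ℤ) : ℕ :=
  Nat.card {s : Multiset ℕ // (s.sum : ℤ) = m ∧ (∀ x ∈ s, Odd x) ∧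
    (sInf {x : ℕ | 0 < x ∧ x % 4 = a % 4 ∧ x ∉ s}) % 8 = (4 + a) % 8}

open Finset in
theorem shanks_aux {R : Type*} [CommRing R] (x : R) (v : ℕ → R)
    (hv : ∀ i, (1 - x ^ (2 * i + 1)) * v i = 1) (n : ℕ) :
    ∀ m ≤ n, ∑ s ∈ range (m + 1), (∏ i ∈ Ico s n, ((1 - x ^ (2 * i + 2)) * v i)) *
      ((1 - x ^ (2 * n + 2)) * v n * x ^ (s * (2 * n + 3)) - x ^ (s * (2 * n + 1))) =
      x ^ ((m + 1) * (2 * n + 1)) * (1 - x ^ (2 * m + 1)) * v n *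
        (∏ i ∈ Ico m n, ((1 - x ^ (2 * i + 2)) * v i)) := by
  intro m
  induction m with
  | zero =>
    intro _
    simp only [zero_add, sum_range_one]
    rw [mul_comm]
    congr 1
    have h := hv n
    simp only [zero_mul, pow_zero, mul_one, one_mul, mul_zero]
    rw [show (2 * n + 2) = (2 * n + 1) + 1 by ring, pow_succ]
    linear_combination h
  | succ m ih =>
    intro hm
    rw [sum_range_succ, ih (by omega), Finset.prod_eq_prod_Ico_succ_bot (show m < n by omega)]
    generalize (∏ i ∈ Ico (m + 1) n, ((1 - x ^ (2 * i + 2)) * v i)) = P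
    have h := hv n
    have h2 := hv m
    have e1 : x ^ ((m + 1) * (2 * n + 3)) = x ^ ((m + 1) * (2 * n + 1)) * x ^ (2 * m + 2) := by
      rw [← pow_add]; congr 1; ring
    have e2 : x ^ ((m + 1 + 1) * (2 * n + 1)) = x ^ ((m + 1) * (2 * n + 1)) * x ^ (2 * n + 1) := by
      rw [← pow_add]; congr 1; ring
    have e3 : x ^ (2 * n + 2) = x ^ (2 * n + 1) * x := by rw [← pow_succ]
    have e4 : x ^ (2 * (m + 1) + 1) = x ^ (2 * m + 2) * x := by rw [← pow_succ]; congr 1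
    rw [e1, e2, e3, e4]
    generalize x ^ ((m + 1) * (2 * n + 1)) = A at *
    generalize x ^ (2 * n + 1) = B at *
    generalize x ^ (2 * m + 2) = C at *
    generalize x ^ (2 * m + 1) = D at *
    linear_combination (A * v n * P * (1 - C)) * h2 + A * P * h

open Finset in
theorem shanks {R : Type*} [CommRing R] (x : R) (v : ℕ → R)
    (hv : ∀ i, (1 - x ^ (2 * i + 1)) * v i = 1) (n : ℕ) :
    ∑ s ∈ range n, (∏ i ∈ Ico s n, ((1 - x ^ (2 * i + 2)) * v i)) * x ^ (s * (2 * n + 1)) =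
    ∑ j ∈ range n, (x ^ (j * (2 * j + 1)) + x ^ ((j + 1) * (2 * j + 1))) := by
  induction n with
  | zero => simp
  | succ n ih =>
    rw [sum_range_succ (fun j => (x ^ (j * (2 * j + 1)) + x ^ ((j + 1) * (2 * j + 1)))), ← ih]
    have h := shanks_aux x v hv n n le_rfl
    simp only [mul_sub, sum_sub_distrib] at h
    rw [sum_range_succ (fun s => (∏ i ∈ Ico s n, ((1 - x ^ (2 * i + 2)) * v i)) *
      x ^ (s * (2 * n + 1)))] at h
    simp only [Ico_self, prod_empty, one_mul, mul_one] at h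
    have e : ∑ s ∈ range (n + 1), (∏ i ∈ Ico s (n + 1), ((1 - x ^ (2 * i + 2)) * v i)) *
        x ^ (s * (2 * (n + 1) + 1)) = ∑ s ∈ range (n + 1),
        (∏ i ∈ Ico s n, ((1 - x ^ (2 * i + 2)) * v i)) *
        ((1 - x ^ (2 * n + 2)) * v n * x ^ (s * (2 * n + 3))) := by
      apply sum_congr rfl
      intro s hs
      rw [prod_Ico_succ_top (by simpa [Nat.lt_succ_iff] using hs)]
      rw [show 2 * (n + 1) + 1 = 2 * n + 3 by ring]
      ring
    rw [e]
    have h3 := hv n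
    linear_combination h + x ^ ((n + 1) * (2 * n + 1)) * h3

open PowerSeries Finset in
theorem stab (g : ℕ → PowerSeries ℤ) (hg : ∀ i, (X : PowerSeries ℤ) ^ (i + 1) ∣ g i - 1) (M : ℕ)
    (s : Finset ℕ) (hs : range M ⊆ s) :
    (X : PowerSeries ℤ) ^ (M + 1) ∣ ∏ i ∈ s, g i - ∏ i ∈ range M, g i := by
  rw [← prod_sdiff hs]
  have : (X : PowerSeries ℤ) ^ (M + 1) ∣ ∏ i ∈ s \ range M, g i - 1 := by
    apply Finset.prod_induction g (fun y => (X : PowerSeries ℤ) ^ (M + 1) ∣ y - 1)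
    · intro a b ha hb
      have : a * b - 1 = (a - 1) * b + (b - 1) := by ring
      rw [this]
      exact dvd_add (ha.mul_right _) hb
    · simp
    · intro i hi
      refine (pow_dvd_pow _ ?_).trans (hg i)
      simp at hi
      omega
  have e : (∏ i ∈ s \ range M, g i) * ∏ i ∈ range M, g i - ∏ i ∈ range M, g i
    = (∏ i ∈ s \ range M, g i - 1) * ∏ i ∈ range M, g i := by ring
  rw [e]
  exact this.mul_right _

open PowerSeries Finset in
theorem key (N : ℕ) (hN : 0 < N) :
    (X : PowerSeries ℤ) ^ (2 * N + 1) ∣ (∏ i ∈ range (2 * N), (1 + X ^ (i + 1))) *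
      (∑ j ∈ range N, ((-X : PowerSeries ℤ) ^ (j * (2 * j + 1)) + (-X) ^ ((j + 1) * (2 * j + 1)))) -
      ∏ i ∈ range N, (1 - X ^ (4 * (i + 1))) := by
  have hu : ∀ i, ∃ v : PowerSeries ℤ, (1 - (-X) ^ (2 * i + 1)) * v = 1 := by
    intro i
    have : IsUnit (1 - (-X : PowerSeries ℤ) ^ (2 * i + 1)) := by
      rw [PowerSeries.isUnit_iff_constantCoeff]
      simp
    exact this.exists_right_inv
  choose v hv using hu
  rw [← shanks (-X) v hv N]
  have split : ∀ K, ∏ i ∈ range (2 * K), (1 + (X : PowerSeries ℤ) ^ (i + 1)) =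
      (∏ i ∈ range K, (1 - (-X) ^ (2 * i + 1))) * ∏ i ∈ range K, (1 + X ^ (2 * i + 2)) := by
    intro K
    induction K with
    | zero => simp
    | succ K ih =>
      rw [show 2 * (K + 1) = 2 * K + 1 + 1 by ring, prod_range_succ, prod_range_succ, ih,
        prod_range_succ, prod_range_succ, Odd.neg_pow ⟨K, rfl⟩]
      ring
  have hD : ∏ i ∈ range N, (1 - (X : PowerSeries ℤ) ^ (4 * (i + 1))) =
      (∏ i ∈ range (2 * N), (1 + X ^ (i + 1))) *
        ∏ i ∈ range N, ((1 - (-X) ^ (2 * i + 2)) * v i) := by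
    rw [split, prod_mul_distrib]
    have : ∀ i ∈ range N, 1 - (X : PowerSeries ℤ) ^ (4 * (i + 1)) =
      ((1 - (-X) ^ (2 * i + 1)) * v i) * (1 + X ^ (2 * i + 2)) * (1 - (-X) ^ (2 * i + 2)) := by
      intro i _
      rw [hv, Even.neg_pow ⟨i + 1, by ring⟩]
      ring
    rw [prod_congr rfl this]
    simp only [prod_mul_distrib]
    ring
  rw [hD, ← mul_sub]
  apply Dvd.dvd.mul_left
  obtain ⟨K, rfl⟩ : ∃ K, N = K + 1 := ⟨N - 1, by omega⟩
  rw [sum_range_succ']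
  simp only [zero_mul, pow_zero, mul_one, Nat.Ico_zero_eq_range, add_sub_cancel_right]
  apply dvd_sum
  intro s _
  apply Dvd.dvd.mul_left
  have : (X : PowerSeries ℤ) ∣ -X := by simp
  exact (pow_dvd_pow_of_dvd this _).trans (pow_dvd_pow _ (by nlinarith))

open PowerSeries Finset in
theorem coeff_D (N m : ℕ) (hm : m ≤ N) : coeff m (∏ i ∈ range N, (1 - (X : PowerSeries ℤ) ^ (4 * (i + 1)))) =
    if 4 ∣ m then coeff (m / 4) (pentagonalSeries ℤ) else 0 := by
  have : ∏ i ∈ range N, (1 - (X : PowerSeries ℤ) ^ (4 * (i + 1))) =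
      PowerSeries.expand 4 (by norm_num) (∏ i ∈ range N, (1 - (X : PowerSeries ℤ) ^ (i + 1))) := by
    simp [map_prod, pow_mul]
  rw [this, PowerSeries.coeff_expand]
  split_ifs with h
  · have h1 := coeff_prod_one_sub_X_pow_eventually_eq ℤ (m / 4)
    rw [Filter.eventually_atTop] at h1
    obtain ⟨s, hs⟩ := h1
    rw [← hs (s ∪ range N) subset_union_left]
    have h2 := stab (fun i => 1 - (X : PowerSeries ℤ) ^ (i + 1)) (by intro i; simp) N
      (s ∪ range N) subset_union_right
    rw [PowerSeries.X_pow_dvd_iff] at h2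
    have := h2 (m / 4) (by omega)
    rw [map_sub] at this
    linarith
  · rfl

open PowerSeries PowerSeries.WithPiTopology Finset in
theorem coeff_E (M m : ℕ) (hm : m ≤ M) : coeff m (∏ i ∈ range M, (1 + (X : PowerSeries ℤ) ^ (i + 1))) =
    (#(Nat.Partition.distincts m) : ℤ) := by
  let : TopologicalSpace ℤ := ⊥
  have : DiscreteTopology ℤ := ⟨rfl⟩
  have h := Nat.Partition.hasProd_powerSeriesMk_card_countRestricted ℤ (m := 2) (by norm_num)
  rw [HasProd, PowerSeries.WithPiTopology.tendsto_iff_coeff_tendsto] at h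
  have h1 := h m
  simp at h1
  obtain ⟨s, hs⟩ := h1
  have h2 := stab (fun i => 1 + (X : PowerSeries ℤ) ^ (i + 1)) (by intro i; simp) M
      (s ∪ range M) subset_union_right
  rw [PowerSeries.X_pow_dvd_iff] at h2
  have h3 := h2 m (by omega)
  rw [map_sub] at h3
  have h4 := hs (s ∪ range M) subset_union_left
  simp [sum_range_succ, Nat.Partition.countRestricted_two] at h4
  linarith

open Finset in
def OF (n : ℕ) : Finset (Multiset ℕ) := (Nat.Partition.odds n).image Nat.Partition.parts

open Finset in
def DF (n : ℕ) : Finset (Multiset ℕ) := (Nat.Partition.distincts n).image Nat.Partition.parts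

theorem mem_OF (n : ℕ) (s : Multiset ℕ) : s ∈ OF n ↔ s.sum = n ∧ ∀ x ∈ s, Odd x := by
  simp only [OF, Finset.mem_image, Nat.Partition.odds, Nat.Partition.restricted, Finset.mem_filter,
    Finset.mem_univ, true_and, Nat.not_even_iff_odd]
  constructor
  · rintro ⟨p, hp, rfl⟩
    exact ⟨p.parts_sum, hp⟩
  · rintro ⟨h1, h2⟩
    exact ⟨⟨s, fun hi => (h2 _ hi).pos, h1⟩, h2, rfl⟩

theorem mem_DF (n : ℕ) (s : Multiset ℕ) : s ∈ DF n ↔ s.sum = n ∧ s.Nodup ∧ ∀ x ∈ s, 0 < x := by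
  simp only [DF, Finset.mem_image, Nat.Partition.distincts, Finset.mem_filter,
    Finset.mem_univ, true_and]
  constructor
  · rintro ⟨p, hp, rfl⟩
    exact ⟨p.parts_sum, hp, fun x hx => p.parts_pos hx⟩
  · rintro ⟨h1, h2, h3⟩
    exact ⟨⟨s, fun hi => h3 _ hi, h1⟩, h2, rfl⟩

open Finset in
theorem card_OF (n : ℕ) : #(OF n) = #(Nat.Partition.distincts n) := by
  rw [← Nat.Partition.card_odds_eq_card_distincts]
  exact card_image_of_injective _ (fun a b h => Nat.Partition.ext h)

open Finset in
theorem Q_eq (n : ℕ) : Q (n : ℤ) = #(OF n) := by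
  rw [card_OF, ← card_image_of_injective (Nat.Partition.distincts n)
    (f := Nat.Partition.parts) (fun a b h => Nat.Partition.ext h)]
  exact Nat.subtype_card (DF n) (fun s => by rw [mem_DF, Nat.cast_inj])

open Finset in
theorem count_ge (a : ℕ) (ha : Odd a) (m k : ℕ) :
    #((OF m).filter (fun s => ∀ i < k, a + 4 * i ∈ s)) =
      if ∑ i ∈ range k, (a + 4 * i) ≤ m then #(OF (m - ∑ i ∈ range k, (a + 4 * i))) else 0 := by
  set t : Multiset ℕ := (Multiset.range k).map (fun i => a + 4 * i) with ht
  have htn : t.Nodup := (Multiset.nodup_range k).map (fun i j h => by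
    omega)
  have hts : t.sum = ∑ i ∈ range k, (a + 4 * i) := rfl
  rw [← hts]
  have hc : ∀ s : Multiset ℕ, (∀ i < k, a + 4 * i ∈ s) ↔ t ≤ s := by
    intro s
    rw [Multiset.le_iff_subset htn, Multiset.subset_iff]
    simp [ht]
  have hto : ∀ x ∈ t, Odd x := by
    intro x hx
    simp only [ht, Multiset.mem_map] at hx
    obtain ⟨i, _, rfl⟩ := hx
    exact ha.add_even ⟨2 * i, by ring⟩
  simp only [hc]
  split_ifs with h
  · rw [← card_image_of_injective (OF (m - t.sum)) (add_right_injective t)]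
    congr 1
    ext s
    simp only [mem_filter, mem_image, mem_OF]
    constructor
    · rintro ⟨⟨h1, h2⟩, h3⟩
      obtain ⟨u, rfl⟩ := Multiset.le_iff_exists_add.1 h3
      rw [Multiset.sum_add] at h1
      exact ⟨u, ⟨by omega, fun x hx => h2 x (Multiset.mem_add.2 (Or.inr hx))⟩, rfl⟩
    · rintro ⟨u, ⟨h1, h2⟩, rfl⟩
      refine ⟨⟨?_, ?_⟩, Multiset.le_add_right _ _⟩
      · rw [Multiset.sum_add]; omega
      · intro x hx
        rcases Multiset.mem_add.1 hx with hx | hx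
        · exact hto x hx
        · exact h2 x hx
  · rw [card_eq_zero, filter_eq_empty_iff]
    intro s hs h3
    rw [mem_OF] at hs
    obtain ⟨u, rfl⟩ := Multiset.le_iff_exists_add.1 h3
    rw [Multiset.sum_add] at hs
    omega

open Finset in
theorem ind_eq (a : ℕ) (ha0 : 0 < a) (ha : a < 4) (m N : ℕ) (hN : m ≤ N) (s : Multiset ℕ)
    (hs : s.sum = m) :
    (if (sInf {x : ℕ | 0 < x ∧ x % 4 = a % 4 ∧ x ∉ s}) % 8 = (4 + a) % 8 then (1 : ℤ) else 0) =
    ∑ j ∈ range N, (-1) ^ j * (if ∀ i < j + 1, a + 4 * i ∈ s then 1 else 0) := by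
  have hle : ∀ x ∈ s, x ≤ m := fun x hx => hs ▸ Multiset.le_sum_of_mem hx
  have hex : ∃ k, a + 4 * k ∉ s := ⟨m, fun h => by have := hle _ h; omega⟩
  classical
  obtain ⟨k, hk1, hk2⟩ : ∃ k, a + 4 * k ∉ s ∧ ∀ i < k, a + 4 * i ∈ s :=
    ⟨Nat.find hex, Nat.find_spec hex, fun i hi => by
      have := Nat.find_min hex hi
      simpa using this⟩
  have hinf : sInf {x : ℕ | 0 < x ∧ x % 4 = a % 4 ∧ x ∉ s} = a + 4 * k := by
    apply IsLeast.csInf_eq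
    constructor
    · exact ⟨by omega, by omega, hk1⟩
    · rintro x ⟨hx0, hx1, hx2⟩
      by_contra hlt
      apply hx2
      have := hk2 ((x - a) / 4) (by omega)
      rwa [show a + 4 * ((x - a) / 4) = x by omega] at this
  have hkN : k ≤ N := by
    rcases k with _ | k
    · omega
    · have := hle _ (hk2 k (by omega))
      omega
  have hiff : ∀ j, (∀ i < j + 1, a + 4 * i ∈ s) ↔ j < k := by
    intro j
    constructor
    · intro h
      by_contra hj
      exact hk1 (h k (by omega))
    · intro h i hi
      exact hk2 i (by omega)
  simp only [hiff, hinf, mul_ite, mul_one, mul_zero]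
  rw [← sum_filter]
  have : (range N).filter (fun j => j < k) = range k := by
    ext j; simp; omega
  rw [this, neg_one_geom_sum]
  rcases Nat.even_or_odd k with h | h
  · obtain ⟨r, hr⟩ := h
    rw [if_neg (by omega), if_pos ⟨r, hr⟩]
  · have h' := Nat.not_even_iff_odd.2 h
    obtain ⟨r, hr⟩ := h
    rw [if_pos (by omega), if_neg h']

open Finset in
theorem Qbar_eq (a : ℕ) (hao : Odd a) (ha : a < 4) (m N : ℕ) (hN : m ≤ N) :
    (Qbar a (m : ℤ) : ℤ) = ∑ j ∈ range N, (-1) ^ j *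
      (if ∑ i ∈ range (j + 1), (a + 4 * i) ≤ m then
        (#(OF (m - ∑ i ∈ range (j + 1), (a + 4 * i))) : ℤ) else 0) := by
  classical
  have h1 : Qbar a (m : ℤ) = #((OF m).filter (fun s =>
      (sInf {x : ℕ | 0 < x ∧ x % 4 = a % 4 ∧ x ∉ s}) % 8 = (4 + a) % 8)) := by
    refine Nat.subtype_card _ (fun s => ?_)
    rw [mem_filter, mem_OF, Nat.cast_inj, and_assoc]
  rw [h1, card_filter]
  push_cast
  rw [sum_congr rfl (fun s hs => ind_eq a hao.pos ha m N hN s ((mem_OF _ _).1 hs).1), sum_comm]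
  apply sum_congr rfl
  intro j _
  rw [← mul_sum]
  congr 1
  have := count_ge a hao m (j + 1)
  rw [card_filter] at this
  have h2 := congrArg (Nat.cast : ℕ → ℤ) this
  push_cast at h2
  convert h2

theorem sum3 (j : ℕ) : ∑ i ∈ Finset.range (j + 1), (3 + 4 * i) = (j + 1) * (2 * (j + 1) + 1) := by
  induction j with
  | zero => simp
  | succ j ih => rw [Finset.sum_range_succ, ih]; ring

theorem sum1 (j : ℕ) : ∑ i ∈ Finset.range (j + 1), (1 + 4 * i) = (j + 1) * (2 * j + 1) := by
  induction j with
  | zero => simp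
  | succ j ih => rw [Finset.sum_range_succ, ih]; ring

open PowerSeries Finset in
theorem identity (m : ℕ) : (#(OF m) : ℤ) - Qbar 3 m - Qbar 1 m =
    if 4 ∣ m then coeff (m / 4) (pentagonalSeries ℤ) else 0 := by
  rw [← coeff_D (m + 1) m (by omega)]
  have h := key (m + 1) (by omega)
  rw [PowerSeries.X_pow_dvd_iff] at h
  have h := h m (by omega)
  rw [map_sub, sub_eq_zero] at h
  rw [← h, Qbar_eq 3 (by decide) (by norm_num) m m le_rfl,
    Qbar_eq 1 (by decide) (by norm_num) m (m + 1) (by omega)]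
  have hE : ∀ d, coeff m ((∏ i ∈ range (2 * (m + 1)), (1 + (X : PowerSeries ℤ) ^ (i + 1))) * X ^ d)
      = if d ≤ m then (#(OF (m - d)) : ℤ) else 0 := by
    intro d
    rw [coeff_mul_X_pow']
    split_ifs
    · rw [coeff_E _ _ (by omega), card_OF]
    · rfl
  have s1 : ∀ j : ℕ, (-X : PowerSeries ℤ) ^ (j * (2 * j + 1)) = C ((-1) ^ j) * X ^ (j * (2 * j + 1)) := by
    intro j
    rw [neg_pow, mul_comm j, pow_mul (-1 : PowerSeries ℤ), Odd.neg_one_pow ⟨j, rfl⟩]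
    simp
  have s2 : ∀ j : ℕ, (-X : PowerSeries ℤ) ^ ((j + 1) * (2 * j + 1)) =
      C ((-1) ^ (j + 1)) * X ^ ((j + 1) * (2 * j + 1)) := by
    intro j
    rw [neg_pow, mul_comm (j + 1), pow_mul (-1 : PowerSeries ℤ), Odd.neg_one_pow ⟨j, rfl⟩]
    simp
  clear h
  generalize (∏ i ∈ range (2 * (m + 1)), (1 + (X : PowerSeries ℤ) ^ (i + 1))) = E at hE ⊢
  have hE2 : ∀ (c : ℤ) (d : ℕ), coeff m (E * (C c * X ^ d)) =
      c * if d ≤ m then (#(OF (m - d)) : ℤ) else 0 := by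
    intro c d
    rw [mul_left_comm, coeff_C_mul, hE]
  rw [mul_sum, map_sum]
  simp only [mul_add E, s1, s2, map_add, hE2, sum3, sum1]
  rw [sum_add_distrib, sum_range_succ' (fun j => (-1 : ℤ) ^ j *
    if j * (2 * j + 1) ≤ m then (#(OF (m - j * (2 * j + 1))) : ℤ) else 0)]
  simp only [pow_succ, mul_neg, mul_one, neg_mul, sum_neg_distrib]
  simp only [pow_zero, one_mul, zero_mul, Nat.zero_le, if_true, Nat.sub_zero]
  abel

open Finset in
theorem mono_OF (m : ℕ) : #(OF m) ≤ #(OF (m + 1)) := by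
  apply card_le_card_of_injOn (fun s => 1 ::ₘ s)
  · intro s hs
    simp only [mem_coe, mem_OF] at hs ⊢
    refine ⟨by rw [Multiset.sum_cons]; omega, ?_⟩
    intro x hx
    rcases Multiset.mem_cons.1 hx with rfl | hx
    · exact odd_one
    · exact hs.2 x hx
  · intro s _ t _ h
    simpa using h

open Finset in
theorem strict_OF (m : ℕ) (hm : 5 ≤ m) (he : Odd m) : #(OF m) < #(OF (m + 1)) := by
  have hsub : (OF m).image (fun s => 1 ::ₘ s) ⊂ OF (m + 1) := by
    rw [ssubset_iff_of_subset]
    · refine ⟨{3, m - 2}, ?_, ?_⟩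
      · rw [mem_OF]
        obtain ⟨r, hr⟩ := he
        refine ⟨by simp; omega, ?_⟩
        intro x hx
        simp at hx
        rcases hx with rfl | rfl
        · decide
        · exact ⟨r - 1, by omega⟩
      · intro h
        rw [mem_image] at h
        obtain ⟨u, _, hu⟩ := h
        have : 1 ∈ ({3, m - 2} : Multiset ℕ) := hu ▸ Multiset.mem_cons_self 1 u
        simp at this
        omega
    · intro s hs
      rw [mem_image] at hs
      obtain ⟨u, hu, rfl⟩ := hs
      rw [mem_OF] at hu ⊢
      refine ⟨by rw [Multiset.sum_cons]; omega, ?_⟩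
      intro x hx
      rcases Multiset.mem_cons.1 hx with rfl | hx
      · exact odd_one
      · exact hu.2 x hx
  have := card_lt_card hsub
  rwa [card_image_of_injective _ (fun s t h => by simpa using h)] at this

open PowerSeries in
theorem pent_le (n : ℕ) : coeff n (pentagonalSeries ℤ) ≤ 1 := by
  by_cases h : n ∈ Set.range pentagonal
  · obtain ⟨k, rfl⟩ := h
    rw [coeff_pentagonalSeries_pentagonal]
    rcases Int.even_or_odd k with hk | hk
    · simp [Int.negOnePow_even k hk]
    · simp [Int.negOnePow_odd k hk]
  · rw [coeff_pentagonalSeries_eq_zero ℤ h]; norm_num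

open PowerSeries in
theorem pent_one : coeff 1 (pentagonalSeries ℤ) = -1 := by
  have h : pentagonal 1 = 1 := by decide
  rw [← h, coeff_pentagonalSeries_pentagonal]
  simp

/-- For every `n ≥ 0`, `Q̄_{4,3}(n) + Q̄_{4,1}(n) ≥ Q(n − 1)`. -/
theorem stmt6 (n : ℤ) (hn : 0 ≤ n) : Q (n - 1) ≤ Qbar 3 n + Qbar 1 n := by
  obtain ⟨m, rfl⟩ := Int.eq_ofNat_of_zero_le hn
  rcases m with _ | m
  · have : Q ((0 : ℕ) - 1 : ℤ) = 0 := by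
      rw [Q, Nat.card_eq_zero]
      left
      constructor
      rintro ⟨s, hs, _⟩
      have h0 : (0 : ℤ) ≤ (s.sum : ℤ) := Int.natCast_nonneg _
      omega
    rw [this]
    exact Nat.zero_le _
  · have e : (((m + 1 : ℕ) : ℤ) - 1) = (m : ℤ) := by push_cast; ring
    rw [e, Q_eq]
    have h := identity (m + 1)
    have h1 := mono_OF m
    split_ifs at h with h4
    · rcases Nat.lt_or_ge m 5 with h5 | h5
      · have : m = 3 := by omega
        subst this
        have := pent_one
        norm_num at h
        rw [this] at h
        push_cast at *
        omega
      · have h2 := strict_OF m h5 (by rw [Nat.odd_iff]; omega)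
        have h3 := pent_le ((m + 1) / 4)
        omega
    · omega
end
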